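/- Let n ≥ 1, let 1 < p₁, p₂ < ∞ and 1 < r < ∞ satisfy 1/r + 1 = 1/p₁ + 1/p₂. There exists a constant C = C(n, p₁, p₂) such that for all measurable functions f, g : ℝⁿ → ℝ with finite weak-L^{p₁} and weak-L^{p₂} quasinorms respectively, the convolution f ∗ g is defined almost everywhere and satisfies ‖f ∗ g‖_{L^{r,∞}(ℝⁿ)} ≤ C ‖f‖_{L^{p₁,∞}(ℝⁿ)} ‖g‖_{L^{p₂,∞}(ℝⁿ)} (the weak-type case of Young's convolution inequality in Lorentz spaces). -/

import Mathlib

open MeasureTheory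
open scoped ENNReal

/-- The weak-`L^p` (Lorentz `L^{p,∞}`) quasinorm of a measurable function on `ℝⁿ`
(Lebesgue measure): `‖f‖_{L^{p,∞}} = sup_{α > 0} α · |{x : |f x| > α}|^{1/p}`. -/
noncomputable def weakLpNorm (n : ℕ) (p : ℝ) (f : EuclideanSpace ℝ (Fin n) → ℝ) : ℝ≥0∞ :=
  ⨆ (α : ℝ) (_ : 0 < α), ENNReal.ofReal α * volume {x | α < |f x|} ^ (1 / p)

/-!
Rescaling `u` and `v`, one may assume that their weak norms are `δ ^ (1 / p₁)` and `δ ^ (1 / p₂)`,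
and it then has to be shown that `u ⋆ v` exceeds a multiple of `δ` only on a set of measure at most
`δ`. Put `φ_s(a) = min a (a ^ s)`. For conjugate exponents `s > p₁` and `s' > p₂`, Young's
inequality gives `a * b ≤ φ_s(a) + φ_{s'}(b) + φ_s(a) * φ_{s'}(b)`, and the layer cake formula shows
that `φ_s(u)` and `φ_{s'}(v)` have integral `O(δ)`. Hence `u ⋆ v` is at most `O(δ)` plus the
convolution `φ_s(u) ⋆ φ_{s'}(v)`, whose integral is `O(δ²)`, and Markov's inequality concludes.
-/

open Set
open scoped NNReal Convolution

section WeakLp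

variable {X ε : Type*} [MeasurableSpace X] {μ : Measure X} [ENorm ε] {p : ℝ} {f : X → ε}

/-- The weak-`L^p` quasinorm `sup_t t · μ{‖f‖ > t}^{1/p}` of a function on an arbitrary measure
space, with values in any type carrying an extended norm. This is the form of `weakLpNorm` in which
absolute values, rescalings and `ℝ≥0∞`-valued convolutions are treated on the same footing. -/
noncomputable def eWeakLpNorm (f : X → ε) (p : ℝ) (μ : Measure X) : ℝ≥0∞ :=
  ⨆ t : ℝ≥0, t * μ {x | t < ‖f x‖ₑ} ^ (1 / p)

lemma weakLpNorm_eq_eWeakLpNorm (n : ℕ) (p : ℝ) (f : EuclideanSpace ℝ (Fin n) → ℝ) :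
    weakLpNorm n p f = eWeakLpNorm f p volume := by
  have levelSet_eq (α : ℝ) (hα : 0 < α) :
      {x | α < |f x|} = {x | ENNReal.ofReal α < ‖f x‖ₑ} := by
    ext x
    simp only [mem_ofPred_eq, Real.enorm_eq_ofReal_abs,
      ENNReal.ofReal_lt_ofReal_iff_of_nonneg hα.le]
  apply le_antisymm
  · refine iSup₂_le fun α hα => ?_
    rw [levelSet_eq α hα]
    exact le_iSup (fun t : ℝ≥0 => t * volume {x | t < ‖f x‖ₑ} ^ (1 / p)) α.toNNReal
  · refine iSup_le fun t => ?_
    rcases eq_or_ne t 0 with rfl | ht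
    · simp
    have ht₀ : 0 < (t : ℝ) := by positivity
    have h := le_iSup₂ (f := fun (α : ℝ) (_ : 0 < α) =>
      ENNReal.ofReal α * volume {x | α < |f x|} ^ (1 / p)) (t : ℝ) ht₀
    rwa [levelSet_eq t ht₀, ENNReal.ofReal_coe_nnreal] at h

lemma mul_measure_lt_rpow_le_eWeakLpNorm (f : X → ε) (p : ℝ) (μ : Measure X) (t : ℝ≥0) :
    t * μ {x | t < ‖f x‖ₑ} ^ (1 / p) ≤ eWeakLpNorm f p μ :=
  le_iSup (fun t : ℝ≥0 => t * μ {x | t < ‖f x‖ₑ} ^ (1 / p)) t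

lemma measure_lt_enorm_le (hp : 0 < p) {t : ℝ≥0} (ht : t ≠ 0) :
    μ {x | t < ‖f x‖ₑ} ≤ (t : ℝ≥0∞) ^ (-p) * eWeakLpNorm f p μ ^ p := by
  have ht' : (t : ℝ≥0∞) ≠ 0 := by simpa
  have h := mul_measure_lt_rpow_le_eWeakLpNorm f p μ t
  rw [mul_comm, ← ENNReal.le_div_iff_mul_le (.inl ht') (.inl ENNReal.coe_ne_top),
    one_div, ENNReal.rpow_inv_le_iff hp, ENNReal.div_rpow_of_nonneg _ _ hp.le] at h
  rwa [ENNReal.rpow_neg, mul_comm, ← div_eq_mul_inv]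

lemma ae_enorm_lt_top_of_eWeakLpNorm_ne_top (hp : 0 < p) (hf : eWeakLpNorm f p μ ≠ ∞) :
    ∀ᵐ x ∂μ, ‖f x‖ₑ < ∞ := by
  have hset : {x | ¬ ‖f x‖ₑ < ∞} = {x | ‖f x‖ₑ = ∞} := by simp
  rw [ae_iff, hset]
  by_contra hpos
  have hpow : μ {x | ‖f x‖ₑ = ∞} ^ (1 / p) ≠ 0 := by
    simp [ENNReal.rpow_eq_zero_iff, hpos, hp.le]
  have hle (t : ℝ≥0) : t ≤ eWeakLpNorm f p μ / μ {x | ‖f x‖ₑ = ∞} ^ (1 / p) := by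
    refine ENNReal.le_div_iff_mul_le (.inl hpow) (.inr hf) |>.2 ?_
    refine le_trans ?_ (mul_measure_lt_rpow_le_eWeakLpNorm f p μ t)
    gcongr with x
    exact fun hx => hx ▸ ENNReal.coe_lt_top
  exact ENNReal.div_ne_top hf hpow (ENNReal.eq_top_of_forall_nnreal_le hle)

lemma eWeakLpNorm_le_mul_of_ae_le_mul {ε' : Type*} [ENorm ε'] {g : X → ε'} {c : ℝ≥0}
    (hp : 0 < p) (h : ∀ᵐ x ∂μ, ‖f x‖ₑ ≤ c * ‖g x‖ₑ) :
    eWeakLpNorm f p μ ≤ c * eWeakLpNorm g p μ := by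
  refine iSup_le fun t => ?_
  rcases eq_or_ne c 0 with rfl | hc
  · have hzero : μ {x | t < ‖f x‖ₑ} = 0 := by
      refine measure_eq_zero_iff_ae_notMem.2 ?_
      filter_upwards [h] with x hx
      simp_all
    simp [hzero, hp]
  · have hlevel : μ {x | t < ‖f x‖ₑ} ≤ μ {x | ((t / c : ℝ≥0) : ℝ≥0∞) < ‖g x‖ₑ} := by
      refine measure_mono_ae ?_
      filter_upwards [h] with x hx hxt
      have hxt : t < ‖f x‖ₑ := hxt
      change ((t / c : ℝ≥0) : ℝ≥0∞) < ‖g x‖ₑ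
      rw [ENNReal.coe_div hc]
      exact ENNReal.div_lt_of_lt_mul' (hxt.trans_le hx)
    calc t * μ {x | t < ‖f x‖ₑ} ^ (1 / p)
        ≤ t * μ {x | ((t / c : ℝ≥0) : ℝ≥0∞) < ‖g x‖ₑ} ^ (1 / p) := by gcongr
      _ = c * ((t / c : ℝ≥0) * μ {x | ((t / c : ℝ≥0) : ℝ≥0∞) < ‖g x‖ₑ} ^ (1 / p)) := by
        rw [← mul_assoc, ← ENNReal.coe_mul, mul_div_cancel₀ t hc]
      _ ≤ c * eWeakLpNorm g p μ := by
        gcongr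
        exact mul_measure_lt_rpow_le_eWeakLpNorm g p μ (t / c)

lemma eWeakLpNorm_const_mul_rpow_le {u : X → ℝ≥0∞} {a δ : ℝ≥0} (hp : 0 < p) (ha : a ≠ 0)
    (h : eWeakLpNorm u p μ ≤ a) :
    eWeakLpNorm (fun x => (δ ^ (1 / p) / a : ℝ≥0) * u x) p μ ^ p ≤ δ := by
  calc eWeakLpNorm (fun x => (δ ^ (1 / p) / a : ℝ≥0) * u x) p μ ^ p
      ≤ ((δ ^ (1 / p) / a : ℝ≥0) * a) ^ p := by
        gcongr
        exact (eWeakLpNorm_le_mul_of_ae_le_mul hp (.of_forall fun x => le_rfl)).trans (by gcongr)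
    _ = δ := by
        rw [← ENNReal.coe_mul, div_mul_cancel₀ _ ha, ← ENNReal.coe_rpow_of_nonneg _ hp.le,
          ← NNReal.rpow_mul, one_div_mul_cancel hp.ne', NNReal.rpow_one]

lemma eWeakLpNorm_le_of_forall_measure_lt_le {c : ℝ≥0∞} (hp : 0 < p) (hc₀ : c ≠ 0) (hc : c ≠ ∞)
    (h : ∀ δ : ℝ≥0∞, δ ≠ 0 → δ ≠ ∞ → μ {x | c * δ ^ (-(1 / p)) < ‖f x‖ₑ} ≤ δ) :
    eWeakLpNorm f p μ ≤ c := by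
  refine iSup_le fun t => ?_
  rcases eq_or_ne t 0 with rfl | ht
  · simp
  have ht' : (t : ℝ≥0∞) ≠ 0 := by simpa
  have hct : c / t ≠ 0 := by simp [hc₀]
  have hct' : c / t ≠ ∞ := ENNReal.div_ne_top hc ht'
  have hlevel : c * ((c / t) ^ p) ^ (-(1 / p)) = t := by
    rw [← ENNReal.rpow_mul, mul_neg, mul_one_div_cancel hp.ne', ENNReal.rpow_neg_one,
      ENNReal.inv_div (.inl ENNReal.coe_ne_top) (.inl ht'), ENNReal.mul_div_cancel hc₀ hc]
  have hmeas := h ((c / t) ^ p) (by simp [ENNReal.rpow_eq_zero_iff, hct, hct'])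
    (ENNReal.rpow_ne_top_of_nonneg hp.le hct')
  rw [hlevel] at hmeas
  rw [mul_comm, ← ENNReal.le_div_iff_mul_le (.inl ht') (.inl ENNReal.coe_ne_top), one_div,
    ENNReal.rpow_inv_le_iff hp]
  exact hmeas

end WeakLp

section Truncation

lemma lintegral_Ioc_zero_one_rpow {a : ℝ} (ha : -1 < a) :
    ∫⁻ t in Ioc (0 : ℝ) 1, ENNReal.ofReal (t ^ a) = ENNReal.ofReal (1 / (a + 1)) := by
  have hint : IntegrableOn (fun t : ℝ => t ^ a) (Ioc 0 1) :=
    (intervalIntegrable_iff_integrableOn_Ioc_of_le zero_le_one).1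
      (intervalIntegral.intervalIntegrable_rpow' ha)
  rw [← ofReal_integral_eq_lintegral_ofReal hint
      (ae_restrict_of_forall_mem measurableSet_Ioc fun t ht => Real.rpow_nonneg ht.1.le a),
    ← intervalIntegral.integral_of_le zero_le_one, integral_rpow (.inl ha), Real.one_rpow,
    Real.zero_rpow (by linarith), sub_zero]

lemma lintegral_Ioi_one_rpow_neg {p : ℝ} (hp : 1 < p) :
    ∫⁻ t in Ioi (1 : ℝ), ENNReal.ofReal (t ^ (-p)) = ENNReal.ofReal (1 / (p - 1)) := by
  rw [← ofReal_integral_eq_lintegral_ofReal (integrableOn_Ioi_rpow_of_lt (by linarith) one_pos)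
      (ae_restrict_of_forall_mem measurableSet_Ioi fun t ht =>
        Real.rpow_nonneg (zero_le_one.trans (le_of_lt ht)) _),
    integral_Ioi_rpow_of_lt (by linarith) one_pos, Real.one_rpow, neg_div, ← div_neg,
    neg_add', neg_neg]

variable {X : Type*} [MeasurableSpace X] {μ : Measure X} {p s : ℝ} {u : X → ℝ≥0∞}

lemma measure_ofReal_lt_le (hp : 0 < p) {t : ℝ} (ht : 0 < t) :
    μ {x | ENNReal.ofReal t < u x} ≤ ENNReal.ofReal (t ^ (-p)) * eWeakLpNorm u p μ ^ p := by
  rw [← ENNReal.ofReal_rpow_of_pos ht]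
  exact measure_lt_enorm_le hp (Real.toNNReal_pos.2 ht).ne'

lemma measure_ofReal_lt_min_one_mul_rpow_le (hp : 0 < p) (s : ℝ) {t : ℝ} (ht : 0 < t) :
    μ {x | ENNReal.ofReal t < min (u x) 1} * ENNReal.ofReal (t ^ (s - 1)) ≤
      (Ioc 0 1).indicator (fun t => ENNReal.ofReal (t ^ (s - p - 1))) t
        * eWeakLpNorm u p μ ^ p := by
  simp only [lt_min_iff]
  by_cases ht₁ : t ≤ 1
  · rw [indicator_of_mem (show t ∈ Ioc (0 : ℝ) 1 from ⟨ht, ht₁⟩)]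
    calc μ {x | ENNReal.ofReal t < u x ∧ ENNReal.ofReal t < 1} * ENNReal.ofReal (t ^ (s - 1))
        ≤ μ {x | ENNReal.ofReal t < u x} * ENNReal.ofReal (t ^ (s - 1)) := by
          gcongr with x
          exact And.left
      _ ≤ ENNReal.ofReal (t ^ (-p)) * eWeakLpNorm u p μ ^ p * ENNReal.ofReal (t ^ (s - 1)) := by
          gcongr
          exact measure_ofReal_lt_le hp ht
      _ = ENNReal.ofReal (t ^ (s - p - 1)) * eWeakLpNorm u p μ ^ p := by
          rw [mul_right_comm, ← ENNReal.ofReal_mul (by positivity), ← Real.rpow_add ht]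
          ring_nf
  · simp [ENNReal.ofReal_lt_one, ht₁, (not_le.1 ht₁).not_gt]

lemma lintegral_min_one_rpow_le (hu : AEMeasurable u μ) (hp : 0 < p) (hps : p < s) :
    ∫⁻ x, min (u x) 1 ^ s ∂μ ≤ ENNReal.ofReal (s / (s - p)) * eWeakLpNorm u p μ ^ p := by
  have hs : 0 < s := hp.trans hps
  have hne (x : X) : min (u x) 1 ≠ ∞ := ne_top_of_le_ne_top ENNReal.one_ne_top (min_le_right _ _)
  calc ∫⁻ x, min (u x) 1 ^ s ∂μ
      = ∫⁻ x, ENNReal.ofReal ((min (u x) 1).toReal ^ s) ∂μ := by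
        simp only [← ENNReal.ofReal_rpow_of_nonneg ENNReal.toReal_nonneg hs.le,
          ENNReal.ofReal_toReal (hne _)]
    _ = ENNReal.ofReal s * ∫⁻ t in Ioi 0,
          μ {x | t < (min (u x) 1).toReal} * ENNReal.ofReal (t ^ (s - 1)) :=
        lintegral_rpow_eq_lintegral_meas_lt_mul μ (.of_forall fun _ => ENNReal.toReal_nonneg)
          (hu.min aemeasurable_const).ennreal_toReal hs
    _ ≤ ENNReal.ofReal s * ∫⁻ t in Ioi 0,
          (Ioc 0 1).indicator (fun t => ENNReal.ofReal (t ^ (s - p - 1))) t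
            * eWeakLpNorm u p μ ^ p := by
        gcongr 1
        refine setLIntegral_mono' measurableSet_Ioi fun t ht => ?_
        simp only [← ENNReal.ofReal_lt_iff_lt_toReal (le_of_lt ht) (hne _)]
        exact measure_ofReal_lt_min_one_mul_rpow_le hp s ht
    _ = ENNReal.ofReal s * (∫⁻ t in Ioc (0 : ℝ) 1, ENNReal.ofReal (t ^ (s - p - 1)))
          * eWeakLpNorm u p μ ^ p := by
        rw [lintegral_mul_const _ (by fun_prop (disch := measurability)), mul_assoc,
          setLIntegral_indicator measurableSet_Ioc, inter_eq_left.2 Ioc_subset_Ioi_self]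
    _ = ENNReal.ofReal (s / (s - p)) * eWeakLpNorm u p μ ^ p := by
        rw [lintegral_Ioc_zero_one_rpow (by linarith), ← ENNReal.ofReal_mul hs.le, sub_add_cancel,
          mul_one_div]

lemma lintegral_tsub_one_le (hu : AEMeasurable u μ) (hp : 1 < p) :
    ∫⁻ x, (u x - 1) ∂μ ≤ ENNReal.ofReal (1 / (p - 1)) * eWeakLpNorm u p μ ^ p := by
  have hp₀ : 0 < p := one_pos.trans hp
  rcases eq_or_ne (eWeakLpNorm u p μ) ∞ with htop | htop
  · rw [htop, ENNReal.top_rpow_of_pos hp₀, ENNReal.mul_top (by simp [hp])]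
    exact le_top
  have hlevel (t : ℝ) (ht : 0 < t) :
      μ {x | t < (u x - 1).toReal} ≤ ENNReal.ofReal ((1 + t) ^ (-p)) * eWeakLpNorm u p μ ^ p := by
    refine (measure_mono fun x hx => ?_).trans (measure_ofReal_lt_le hp₀ (by positivity))
    have hx : ENNReal.ofReal t < u x - 1 :=
      ((ENNReal.ofReal_lt_ofReal_iff_of_nonneg ht.le).2 hx).trans_le ENNReal.ofReal_toReal_le
    change ENNReal.ofReal (1 + t) < u x
    rw [ENNReal.ofReal_add zero_le_one ht.le, ENNReal.ofReal_one, add_comm]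
    exact lt_tsub_iff_right.1 hx
  calc ∫⁻ x, (u x - 1) ∂μ = ∫⁻ x, ENNReal.ofReal (u x - 1).toReal ∂μ := by
        refine lintegral_congr_ae ?_
        filter_upwards [ae_enorm_lt_top_of_eWeakLpNorm_ne_top hp₀ htop] with x hx
        exact (ENNReal.ofReal_toReal (ENNReal.sub_ne_top hx.ne)).symm
    _ = ∫⁻ t in Ioi 0, μ {x | t < (u x - 1).toReal} :=
        lintegral_eq_lintegral_meas_lt μ (.of_forall fun _ => ENNReal.toReal_nonneg)
          (hu.sub_const 1).ennreal_toReal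
    _ ≤ ∫⁻ t in Ioi 0, ENNReal.ofReal ((1 + t) ^ (-p)) * eWeakLpNorm u p μ ^ p :=
        setLIntegral_mono' measurableSet_Ioi hlevel
    _ = (∫⁻ t in Ioi (1 : ℝ), ENNReal.ofReal (t ^ (-p))) * eWeakLpNorm u p μ ^ p := by
        rw [lintegral_mul_const _ (by fun_prop),
          ← (measurePreserving_add_left volume (1 : ℝ)).setLIntegral_comp_preimage (s := Ioi 1)
            measurableSet_Ioi (by fun_prop), preimage_const_add_Ioi, sub_self]
    _ = ENNReal.ofReal (1 / (p - 1)) * eWeakLpNorm u p μ ^ p := by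
        rw [lintegral_Ioi_one_rpow_neg hp]

/-- The constant bounding `∫ min(u, u^s)` by the `p`-th power of the weak-`L^p` quasinorm of `u`,
for `1 < p < s`: the summands are the contributions of `{u ≤ 1}` and `{u > 1}`. -/
noncomputable def truncationConst (p s : ℝ) : ℝ := s / (s - p) + 1 / (p - 1)

lemma truncationConst_pos (hp : 1 < p) (hps : p < s) : 0 < truncationConst p s := by
  have hs : 0 < s := by linarith
  exact add_pos (div_pos hs (sub_pos.2 hps)) (one_div_pos.2 (sub_pos.2 hp))

lemma min_rpow_le_min_one_rpow_add_tsub_one (a : ℝ≥0∞) (s : ℝ) :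
    min a (a ^ s) ≤ min a 1 ^ s + (a - 1) := by
  rcases le_total a 1 with ha | ha
  · simp [ha]
  · simp [ha]

lemma lintegral_min_rpow_le (hu : AEMeasurable u μ) (hp : 1 < p) (hps : p < s) :
    ∫⁻ x, min (u x) (u x ^ s) ∂μ ≤
      ENNReal.ofReal (truncationConst p s) * eWeakLpNorm u p μ ^ p := by
  have hsp : 0 ≤ s / (s - p) := div_nonneg (by linarith) (by linarith)
  have hp₁ : 0 ≤ 1 / (p - 1) := one_div_nonneg.2 (by linarith)
  calc ∫⁻ x, min (u x) (u x ^ s) ∂μ ≤ ∫⁻ x, (min (u x) 1 ^ s + (u x - 1)) ∂μ :=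
        lintegral_mono fun x => min_rpow_le_min_one_rpow_add_tsub_one (u x) s
    _ = ∫⁻ x, min (u x) 1 ^ s ∂μ + ∫⁻ x, (u x - 1) ∂μ :=
        lintegral_add_right' _ (hu.sub_const 1)
    _ ≤ ENNReal.ofReal (s / (s - p)) * eWeakLpNorm u p μ ^ p +
          ENNReal.ofReal (1 / (p - 1)) * eWeakLpNorm u p μ ^ p :=
        add_le_add (lintegral_min_one_rpow_le hu (by linarith) hps) (lintegral_tsub_one_le hu hp)
    _ = ENNReal.ofReal (truncationConst p s) * eWeakLpNorm u p μ ^ p := by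
        rw [truncationConst, ENNReal.ofReal_add hsp hp₁, add_mul]

lemma mul_le_min_rpow_add_min_rpow_add_mul {s' : ℝ} (hs : s.HolderConjugate s') (a b : ℝ≥0∞) :
    a * b ≤ min a (a ^ s) + min b (b ^ s') + min a (a ^ s) * min b (b ^ s') := by
  have min_eq_of_one_le {c : ℝ≥0∞} {q : ℝ} (hq : 1 < q) (hc : 1 ≤ c) : min c (c ^ q) = c :=
    min_eq_left (ENNReal.le_rpow_self_of_one_le hc hq.le)
  have min_eq_of_le_one {c : ℝ≥0∞} {q : ℝ} (hq : 1 < q) (hc : c ≤ 1) : min c (c ^ q) = c ^ q :=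
    min_eq_right (ENNReal.rpow_le_self_of_le_one hc hq.le)
  rcases le_total 1 a with ha | ha <;> rcases le_total 1 b with hb | hb
  · rw [min_eq_of_one_le hs.lt ha, min_eq_of_one_le hs.symm.lt hb]
    exact le_add_self
  · rw [min_eq_of_one_le hs.lt ha]
    exact (mul_le_of_le_one_right' hb).trans (le_add_right le_self_add)
  · rw [min_eq_of_one_le hs.symm.lt hb]
    exact (mul_le_of_le_one_left' ha).trans (le_add_right le_add_self)
  · rw [min_eq_of_le_one hs.lt ha, min_eq_of_le_one hs.symm.lt hb]
    calc a * b ≤ a ^ s / ENNReal.ofReal s + b ^ s' / ENNReal.ofReal s' :=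
          ENNReal.young_inequality a b hs
      _ ≤ a ^ s + b ^ s' := add_le_add
          (ENNReal.div_le_of_le_mul (le_mul_of_one_le_right'
            (ENNReal.one_le_ofReal.2 hs.lt.le)))
          (ENNReal.div_le_of_le_mul (le_mul_of_one_le_right'
            (ENNReal.one_le_ofReal.2 hs.symm.lt.le)))
      _ ≤ a ^ s + b ^ s' + a ^ s * b ^ s' := le_self_add

end Truncation

section YoungExponent

variable {p q : ℝ}

/-- The exponent `s` with `1 / s = (1 + 1 / p - 1 / q) / 2`. If `1 / p + 1 / q = 1 / r + 1`, then
`1 / s = 1 / p - 1 / (2 r)`: the excess `1 / r` over Hölder's relation is shared equally between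
`p` and `q`, so that `youngExponent p q` and `youngExponent q p` are conjugate. -/
noncomputable def youngExponent (p q : ℝ) : ℝ := 2 / (1 + 1 / p - 1 / q)

/-- The constant in the weak Young inequality for weak `L^p` and weak `L^q`. -/
noncomputable def weakYoungConst (p q : ℝ) : ℝ :=
  truncationConst p (youngExponent p q) + truncationConst q (youngExponent q p) +
    truncationConst p (youngExponent p q) * truncationConst q (youngExponent q p)

lemma weakYoungConst_comm (p q : ℝ) : weakYoungConst p q = weakYoungConst q p := by
  unfold weakYoungConst
  ring

lemma lt_youngExponent (hp : 0 < p) (hq : 1 < q) (hpq : 1 < 1 / p + 1 / q) :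
    p < youngExponent p q := by
  have hq' : 1 / q < 1 := (div_lt_one (by linarith)).2 hq
  have : 0 < 1 / p := by positivity
  rw [youngExponent, lt_div_iff₀ (by linarith)]
  calc p * (1 + 1 / p - 1 / q) < p * (2 * (1 / p)) := by gcongr; linarith
    _ = 2 := by field_simp

lemma holderConjugate_youngExponent (hp : 1 < p) (hq : 1 < q) (hpq : 1 < 1 / p + 1 / q) :
    (youngExponent p q).HolderConjugate (youngExponent q p) := by
  rw [Real.holderConjugate_iff]
  refine ⟨hp.trans (lt_youngExponent (by linarith) hq hpq), ?_⟩
  rw [youngExponent, youngExponent, inv_div, inv_div]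
  ring

lemma truncationConst_youngExponent_pos (hp : 1 < p) (hq : 1 < q) (hpq : 1 < 1 / p + 1 / q) :
    0 < truncationConst p (youngExponent p q) :=
  truncationConst_pos hp (lt_youngExponent (by linarith) hq hpq)

lemma weakYoungConst_pos (hp : 1 < p) (hq : 1 < q) (hpq : 1 < 1 / p + 1 / q) :
    0 < weakYoungConst p q := by
  have hpos₁ := truncationConst_youngExponent_pos hp hq hpq
  have hpos₂ := truncationConst_youngExponent_pos hq hp (add_comm (1 / p) _ ▸ hpq)
  unfold weakYoungConst
  positivity

end YoungExponent

section Convolution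

variable {G : Type*} [AddGroup G] [MeasurableSpace G] {μ : Measure G}

lemma lconvolution_const_mul_const_mul (c₁ c₂ : ℝ≥0) (u v : G → ℝ≥0∞) (x : G) :
    ((fun y => c₁ * u y) ⋆ₗ[μ] fun y => c₂ * v y) x = (c₁ * c₂ : ℝ≥0) * (u ⋆ₗ[μ] v) x := by
  simp only [lconvolution_def, ← lintegral_const_mul' _ _ ENNReal.coe_ne_top]
  push_cast
  simp only [mul_mul_mul_comm]

variable [MeasurableAdd₂ G] [MeasurableNeg G] [μ.IsAddLeftInvariant]

lemma lintegral_lconvolution [SFinite μ] {u v : G → ℝ≥0∞} (hu : AEMeasurable u μ)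
    (hv : AEMeasurable v μ) :
    ∫⁻ x, (u ⋆ₗ[μ] v) x ∂μ = (∫⁻ x, u x ∂μ) * ∫⁻ x, v x ∂μ := by
  simp only [lconvolution_def]
  rw [lintegral_lintegral_swap (by fun_prop), ← lintegral_mul_const'' _ hu]
  refine lintegral_congr fun y => ?_
  have hvy : AEMeasurable (fun x => v (-y + x)) μ :=
    hv.comp_quasiMeasurePreserving (measurePreserving_add_left μ (-y)).quasiMeasurePreserving
  rw [lintegral_const_mul'' _ hvy, lintegral_add_left_eq_self v (-y)]

lemma measure_le_lconvolution_le [SFinite μ] {u v : G → ℝ≥0∞} (hu : AEMeasurable u μ)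
    (hv : AEMeasurable v μ) {t : ℝ≥0∞} (ht₀ : t ≠ 0) (ht : t ≠ ∞) :
    μ {x | t ≤ (u ⋆ₗ[μ] v) x} ≤ (∫⁻ x, u x ∂μ) * (∫⁻ x, v x ∂μ) / t :=
  lintegral_lconvolution hu hv ▸ meas_ge_le_lintegral_div (aemeasurable_lconvolution hu hv) ht₀ ht

variable [μ.IsNegInvariant]

lemma measurePreserving_neg_add (x : G) : MeasurePreserving (fun y => -y + x) μ μ := by
  simpa [Function.comp_def] using
    (Measure.measurePreserving_neg μ).comp (measurePreserving_add_left μ (-x))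

lemma lintegral_comp_neg_add (v : G → ℝ≥0∞) (x : G) :
    ∫⁻ y, v (-y + x) ∂μ = ∫⁻ y, v y ∂μ := by
  rw [← lintegral_sub_left_eq_self _ x]
  simp

lemma lintegral_mul_comp_sub_eq_lconvolution (u v : G → ℝ≥0∞) (x : G) :
    ∫⁻ y, u y * v (x - y) ∂μ = (v ⋆ₗ[μ] u) x := by
  rw [lconvolution_def, ← lintegral_comp_neg_add _ x]
  simp [sub_eq_add_neg, mul_comm]

lemma lconvolution_le_lintegral_add_lintegral_add_lconvolution {s s' : ℝ}
    (hs : s.HolderConjugate s') {u v : G → ℝ≥0∞} (hu : AEMeasurable u μ) (hv : AEMeasurable v μ)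
    (x : G) :
    (u ⋆ₗ[μ] v) x ≤ ∫⁻ y, min (u y) (u y ^ s) ∂μ + ∫⁻ y, min (v y) (v y ^ s') ∂μ +
      ((fun y => min (u y) (u y ^ s)) ⋆ₗ[μ] (fun y => min (v y) (v y ^ s'))) x := by
  let U : G → ℝ≥0∞ := fun y => min (u y) (u y ^ s)
  let V : G → ℝ≥0∞ := fun y => min (v y) (v y ^ s')
  have hU : AEMeasurable U μ := hu.min (hu.pow_const s)
  have hV : AEMeasurable (fun y => V (-y + x)) μ :=
    (hv.min (hv.pow_const s')).comp_quasiMeasurePreserving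
      (measurePreserving_neg_add x).quasiMeasurePreserving
  calc (u ⋆ₗ[μ] v) x ≤ ∫⁻ y, (U y + V (-y + x) + U y * V (-y + x)) ∂μ :=
        lintegral_mono fun y => mul_le_min_rpow_add_min_rpow_add_mul hs (u y) (v (-y + x))
    _ = ∫⁻ y, U y ∂μ + ∫⁻ y, V (-y + x) ∂μ + ∫⁻ y, U y * V (-y + x) ∂μ := by
        rw [lintegral_add_left' (by exact hU.add hV), lintegral_add_left' hU]
    _ = ∫⁻ y, U y ∂μ + ∫⁻ y, V y ∂μ + (U ⋆ₗ[μ] V) x := by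
        rw [lintegral_comp_neg_add V x, lconvolution_def]

variable {𝕜 E E' F : Type*} [NontriviallyNormedField 𝕜] [NormedAddCommGroup E]
  [NormedAddCommGroup E'] [NormedAddCommGroup F] [NormedSpace 𝕜 E] [NormedSpace 𝕜 E']
  [NormedSpace 𝕜 F] {L : E →L[𝕜] E' →L[𝕜] F} {f : G → E} {g : G → E'}

lemma lintegral_enorm_convolution_integrand_le (L : E →L[𝕜] E' →L[𝕜] F) (f : G → E) (g : G → E')
    (x : G) :
    ∫⁻ y, ‖L (f y) (g (x - y))‖ₑ ∂μ ≤ ‖L‖ₑ * ((‖g ·‖ₑ) ⋆ₗ[μ] (‖f ·‖ₑ)) x := by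
  rw [← lintegral_mul_comp_sub_eq_lconvolution, ← lintegral_const_mul' _ _ enorm_ne_top]
  simp only [← mul_assoc]
  exact lintegral_mono fun y => L.le_opENorm₂ (f y) (g (x - y))

lemma convolutionExistsAt_of_lconvolution_lt_top (hf : AEStronglyMeasurable f μ)
    (hg : AEStronglyMeasurable g μ) {x : G} (hx : ((‖g ·‖ₑ) ⋆ₗ[μ] (‖f ·‖ₑ)) x < ∞) :
    ConvolutionExistsAt f g x L μ := by
  refine ⟨hf.convolution_integrand_snd' L ?_, ?_⟩
  · rwa [(Measure.measurePreserving_sub_left μ x).map_eq]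
  · exact (lintegral_enorm_convolution_integrand_le L f g x).trans_lt
      (ENNReal.mul_lt_top enorm_lt_top hx)

variable [SFinite μ] {p₁ p₂ : ℝ}

lemma measure_lt_lconvolution_le (hp₁ : 1 < p₁) (hp₂ : 1 < p₂) (hp : 1 < 1 / p₁ + 1 / p₂)
    {u v : G → ℝ≥0∞} (hu : AEMeasurable u μ) (hv : AEMeasurable v μ) {δ : ℝ≥0∞} (hδ₀ : δ ≠ 0)
    (hδ : δ ≠ ∞) (huδ : eWeakLpNorm u p₁ μ ^ p₁ ≤ δ) (hvδ : eWeakLpNorm v p₂ μ ^ p₂ ≤ δ) :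
    μ {x | ENNReal.ofReal (weakYoungConst p₁ p₂) * δ < (u ⋆ₗ[μ] v) x} ≤ δ := by
  let s := youngExponent p₁ p₂
  let s' := youngExponent p₂ p₁
  have hp' : 1 < 1 / p₂ + 1 / p₁ := add_comm (1 / p₁) _ ▸ hp
  have hA : 0 < truncationConst p₁ s := truncationConst_youngExponent_pos hp₁ hp₂ hp
  have hB : 0 < truncationConst p₂ s' := truncationConst_youngExponent_pos hp₂ hp₁ hp'
  let A := ENNReal.ofReal (truncationConst p₁ s)
  let B := ENNReal.ofReal (truncationConst p₂ s')
  have hAB₀ : A * B ≠ 0 := by simp [A, B, hA, hB]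
  let U : G → ℝ≥0∞ := fun y => min (u y) (u y ^ s)
  let V : G → ℝ≥0∞ := fun y => min (v y) (v y ^ s')
  have hU : ∫⁻ y, U y ∂μ ≤ A * δ :=
    (lintegral_min_rpow_le hu hp₁ (lt_youngExponent (by linarith) hp₂ hp)).trans (by gcongr)
  have hV : ∫⁻ y, V y ∂μ ≤ B * δ :=
    (lintegral_min_rpow_le hv hp₂ (lt_youngExponent (by linarith) hp₁ hp')).trans (by gcongr)
  have hconst : ENNReal.ofReal (weakYoungConst p₁ p₂) * δ = A * δ + B * δ + A * B * δ := by
    rw [weakYoungConst, ENNReal.ofReal_add (by positivity) (by positivity),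
      ENNReal.ofReal_add hA.le hB.le, ENNReal.ofReal_mul hA.le, add_mul, add_mul]
  have hsubset : {x | ENNReal.ofReal (weakYoungConst p₁ p₂) * δ < (u ⋆ₗ[μ] v) x} ⊆
      {x | A * B * δ ≤ (U ⋆ₗ[μ] V) x} := by
    intro x hx
    have hle := hx.out.le.trans (lconvolution_le_lintegral_add_lintegral_add_lconvolution
      (holderConjugate_youngExponent hp₁ hp₂ hp) hu hv x)
    rw [hconst] at hle
    exact (ENNReal.add_le_add_iff_left (by finiteness)).1
      (hle.trans (add_le_add_left (add_le_add hU hV) _))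
  calc μ {x | ENNReal.ofReal (weakYoungConst p₁ p₂) * δ < (u ⋆ₗ[μ] v) x}
      ≤ μ {x | A * B * δ ≤ (U ⋆ₗ[μ] V) x} := measure_mono hsubset
    _ ≤ (∫⁻ x, U x ∂μ) * (∫⁻ x, V x ∂μ) / (A * B * δ) :=
      measure_le_lconvolution_le (hu.min (hu.pow_const s)) (hv.min (hv.pow_const s'))
        (mul_ne_zero hAB₀ hδ₀) (by finiteness)
    _ ≤ δ := by
      refine ENNReal.div_le_of_le_mul' ((mul_le_mul' hU hV).trans_eq ?_)
      ring

lemma eWeakLpNorm_lconvolution_le_of_le {r : ℝ} (hp₁ : 1 < p₁) (hp₂ : 1 < p₂) (hr : 0 < r)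
    (hrpq : 1 / r + 1 = 1 / p₁ + 1 / p₂) {u v : G → ℝ≥0∞} (hu : AEMeasurable u μ)
    (hv : AEMeasurable v μ) {a b : ℝ≥0} (ha : a ≠ 0) (hb : b ≠ 0) (hua : eWeakLpNorm u p₁ μ ≤ a)
    (hvb : eWeakLpNorm v p₂ μ ≤ b) :
    eWeakLpNorm (u ⋆ₗ[μ] v) r μ ≤ ENNReal.ofReal (weakYoungConst p₁ p₂) * (a * b) := by
  have hp : 1 < 1 / p₁ + 1 / p₂ := hrpq ▸ lt_add_of_pos_left 1 (one_div_pos.2 hr)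
  set K := ENNReal.ofReal (weakYoungConst p₁ p₂)
  have hK : K ≠ 0 := (ENNReal.ofReal_pos.2 (weakYoungConst_pos hp₁ hp₂ hp)).ne'
  refine eWeakLpNorm_le_of_forall_measure_lt_le hr (by simp [hK, ha, hb]) (by finiteness)
    fun δ hδ₀ hδ => ?_
  lift δ to ℝ≥0 using hδ
  have hδ₀ : δ ≠ 0 := by simpa using hδ₀
  let c₁ : ℝ≥0 := δ ^ (1 / p₁) / a
  let c₂ : ℝ≥0 := δ ^ (1 / p₂) / b
  have hc : ((c₁ * c₂ : ℝ≥0) : ℝ≥0∞) ≠ 0 := by simp [c₁, c₂, hδ₀, ha, hb]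
  have hscale : c₁ * c₂ * (a * b * δ ^ (-(1 / r))) = δ := by
    calc c₁ * c₂ * (a * b * δ ^ (-(1 / r)))
        = δ ^ (1 / p₁) * δ ^ (1 / p₂) * δ ^ (-(1 / r)) := by
          simp only [c₁, c₂]
          field_simp
      _ = δ := by
          rw [← NNReal.rpow_add hδ₀, ← NNReal.rpow_add hδ₀, ← hrpq, add_neg_cancel_comm,
            NNReal.rpow_one]
  have hlevel : (c₁ * c₂ : ℝ≥0) * (K * (a * b) * (δ : ℝ≥0∞) ^ (-(1 / r))) = K * δ := by
    rw [← ENNReal.coe_rpow_of_ne_zero hδ₀]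
    nth_rw 2 [← hscale]
    push_cast
    ring
  refine (measure_mono fun x hx => ?_).trans
    (measure_lt_lconvolution_le hp₁ hp₂ hp (hu.const_mul (c₁ : ℝ≥0∞)) (hv.const_mul (c₂ : ℝ≥0∞))
      (by simpa) ENNReal.coe_ne_top
      (eWeakLpNorm_const_mul_rpow_le (by linarith) ha hua)
      (eWeakLpNorm_const_mul_rpow_le (by linarith) hb hvb))
  rw [mem_ofPred_eq, lconvolution_const_mul_const_mul, ← hlevel]
  exact ENNReal.mul_lt_mul_right hc ENNReal.coe_ne_top hx

lemma eWeakLpNorm_lconvolution_le {r : ℝ} (hp₁ : 1 < p₁) (hp₂ : 1 < p₂) (hr : 0 < r)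
    (hrpq : 1 / r + 1 = 1 / p₁ + 1 / p₂) {u v : G → ℝ≥0∞} (hu : AEMeasurable u μ)
    (hv : AEMeasurable v μ) (hu' : eWeakLpNorm u p₁ μ ≠ ∞) (hv' : eWeakLpNorm v p₂ μ ≠ ∞) :
    eWeakLpNorm (u ⋆ₗ[μ] v) r μ ≤
      ENNReal.ofReal (weakYoungConst p₁ p₂) * (eWeakLpNorm u p₁ μ * eWeakLpNorm v p₂ μ) := by
  have hp : 1 < 1 / p₁ + 1 / p₂ := hrpq ▸ lt_add_of_pos_left 1 (one_div_pos.2 hr)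
  have hK : ENNReal.ofReal (weakYoungConst p₁ p₂) ≠ 0 :=
    (ENNReal.ofReal_pos.2 (weakYoungConst_pos hp₁ hp₂ hp)).ne'
  rw [← ENNReal.div_le_iff' hK ENNReal.ofReal_ne_top]
  -- Approximating from above covers the case in which one of the quasinorms vanishes.
  refine ENNReal.le_mul_of_forall_lt (.inr hv') (.inl hu') fun a ha b hb => ?_
  rcases eq_or_ne a ∞ with rfl | ha'
  · simp [ENNReal.top_mul (pos_of_gt hb).ne']
  rcases eq_or_ne b ∞ with rfl | hb'
  · simp [ENNReal.mul_top (pos_of_gt ha).ne']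
  lift a to ℝ≥0 using ha'
  lift b to ℝ≥0 using hb'
  rw [ENNReal.div_le_iff' hK ENNReal.ofReal_ne_top]
  exact eWeakLpNorm_lconvolution_le_of_le hp₁ hp₂ hr hrpq hu hv
    (by simpa using (pos_of_gt ha).ne') (by simpa using (pos_of_gt hb).ne') ha.le hb.le

theorem weak_young_convolution_general [NormedSpace ℝ F] {r : ℝ} (hp₁ : 1 < p₁) (hp₂ : 1 < p₂)
    (hr : 0 < r) (hrpq : 1 / r + 1 = 1 / p₁ + 1 / p₂) (hf : AEStronglyMeasurable f μ)
    (hg : AEStronglyMeasurable g μ) (hf' : eWeakLpNorm f p₁ μ ≠ ∞)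
    (hg' : eWeakLpNorm g p₂ μ ≠ ∞) (L : E →L[𝕜] E' →L[𝕜] F) :
    (∀ᵐ x ∂μ, ConvolutionExistsAt f g x L μ) ∧
      eWeakLpNorm (f ⋆[L, μ] g) r μ ≤
        ‖L‖ₑ * (ENNReal.ofReal (weakYoungConst p₁ p₂) *
          (eWeakLpNorm f p₁ μ * eWeakLpNorm g p₂ μ)) := by
  have hweak : eWeakLpNorm ((‖g ·‖ₑ) ⋆ₗ[μ] (‖f ·‖ₑ)) r μ ≤
      ENNReal.ofReal (weakYoungConst p₁ p₂) * (eWeakLpNorm f p₁ μ * eWeakLpNorm g p₂ μ) := by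
    rw [weakYoungConst_comm, mul_comm (eWeakLpNorm f p₁ μ)]
    exact eWeakLpNorm_lconvolution_le hp₂ hp₁ hr (add_comm (1 / p₁) _ ▸ hrpq) hg.enorm hf.enorm
      hg' hf'
  constructor
  · filter_upwards [ae_enorm_lt_top_of_eWeakLpNorm_ne_top hr
      (ne_top_of_le_ne_top (by finiteness) hweak)] with x hx
    exact convolutionExistsAt_of_lconvolution_lt_top hf hg hx
  · refine (eWeakLpNorm_le_mul_of_ae_le_mul hr (.of_forall fun x => ?_)).trans
      (mul_le_mul_right hweak ‖L‖ₑ)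
    exact (enorm_integral_le_lintegral_enorm _).trans
      (lintegral_enorm_convolution_integrand_le L f g x)

end Convolution

/-- **Weak-type Young (O'Neil) convolution inequality.**
Let `1 < p₁, p₂, r < ∞` with `1/r + 1 = 1/p₁ + 1/p₂`. There is `C = C(n, p₁, p₂) > 0`
such that for all measurable `f, g` with finite weak-`L^{p₁}` and weak-`L^{p₂}` quasinorms,
the convolution `f ∗ g` is defined a.e. and
`‖f ∗ g‖_{L^{r,∞}} ≤ C ‖f‖_{L^{p₁,∞}} ‖g‖_{L^{p₂,∞}}`. -/
theorem weak_young_convolution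
    (n : ℕ) (hn : 1 ≤ n) (p₁ p₂ r : ℝ) (hp₁ : 1 < p₁) (hp₂ : 1 < p₂) (hr : 1 < r)
    (hrpq : 1 / r + 1 = 1 / p₁ + 1 / p₂) :
    ∃ C : ℝ, 0 < C ∧
      ∀ f g : EuclideanSpace ℝ (Fin n) → ℝ, Measurable f → Measurable g →
        weakLpNorm n p₁ f < ∞ → weakLpNorm n p₂ g < ∞ →
          (∀ᵐ x : EuclideanSpace ℝ (Fin n), Integrable fun y => f (x - y) * g y) ∧
          weakLpNorm n r (fun x => ∫ y, f (x - y) * g y) ≤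
            ENNReal.ofReal C * weakLpNorm n p₁ f * weakLpNorm n p₂ g := by
  have hp : 1 < 1 / p₁ + 1 / p₂ := hrpq ▸ lt_add_of_pos_left 1 (by positivity)
  refine ⟨weakYoungConst p₁ p₂, weakYoungConst_pos hp₁ hp₂ hp, fun f g hf hg hf' hg' => ?_⟩
  simp only [weakLpNorm_eq_eWeakLpNorm, ← convolution_mul_swap] at hf' hg' ⊢
  obtain ⟨hexists, hle⟩ := weak_young_convolution_general hp₁ hp₂ (one_pos.trans hr) hrpq
    hf.aestronglyMeasurable hg.aestronglyMeasurable hf'.ne hg'.ne (ContinuousLinearMap.mul ℝ ℝ)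
  rw [ContinuousLinearMap.opENorm_mul, one_mul, ← mul_assoc] at hle
  exact ⟨hexists.mono fun _ => ConvolutionExistsAt.integrable_swap, hle⟩
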